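/- arXiv:1205.3612 — 2 statements merged into one kernel-verified Lean document; each statement's English description precedes it below -/
import Mathlib

section
/- In typed Kleene algebras, if the untyped strict equality ⊢ a =⁺ b is derivable, then for all objects n,m, a : n→m is derivable if and only if b : n→m is derivable. -/
/-- Terms over the signature {·₂, +₂, *₁, 1₀, 0₀}. -/
inductive KTerm (X : Type) : Type where
  | var : X → KTerm X
  | one : KTerm X
  | zero : KTerm X
  | mul : KTerm X → KTerm X → KTerm X
  | add : KTerm X → KTerm X → KTerm X
  | star : KTerm X → KTerm X

/-- Typing judgement for typed Kleene algebras, in environment `Γ`. -/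
inductive KTyp {X T : Type} (Γ : X → T × T) : KTerm X → T → T → Prop where
  | var (x : X) (n m : T) : Γ x = (n, m) → KTyp Γ (.var x) n m
  | one (n : T) : KTyp Γ .one n n
  | zero (n m : T) : KTyp Γ .zero n m
  | mul {a b : KTerm X} {n m p : T} :
      KTyp Γ a n m → KTyp Γ b m p → KTyp Γ (.mul a b) n p
  | add {a b : KTerm X} {n m : T} :
      KTyp Γ a n m → KTyp Γ b n m → KTyp Γ (.add a b) n m
  | star {a : KTerm X} {n : T} : KTyp Γ a n n → KTyp Γ (.star a) n n

/-- `⌊a⌋`: the normal form of `a` for the convergent rewriting system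
`a+0 → a`, `0+a → a`, `0·a → 0`, `a·0 → 0`, `0* → 1`. -/
def KTerm.norm {X : Type} : KTerm X → KTerm X
  | .var x => .var x
  | .one => .one
  | .zero => .zero
  | .mul a b =>
    match a.norm, b.norm with
    | .zero, _ => .zero
    | _, .zero => .zero
    | a', b' => .mul a' b'
  | .add a b =>
    match a.norm, b.norm with
    | .zero, b' => b'
    | a', .zero => a'
    | a', b' => .add a' b'
  | .star a =>
    match a.norm with
    | .zero => .one
    | a' => .star a'

/-- Strict typed equality judgement `a =⁺ b : n→m` for typed Kleene algebras: the
Kleene algebra equality judgement without the annihilation rules, with the two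
distributivity rules restricted to strict factors, and with the two star induction
rules restricted to strict `b`. `a ≤ b : n→m` abbreviates `a+b = b : n→m`. -/
inductive KEqS {X T : Type} (Γ : X → T × T) : KTerm X → KTerm X → T → T → Prop where
  | var (x : X) (n m : T) : Γ x = (n, m) → KEqS Γ (.var x) (.var x) n m
  | symm {a b : KTerm X} {n m : T} : KEqS Γ a b n m → KEqS Γ b a n m
  | trans {a b c : KTerm X} {n m : T} :
      KEqS Γ a b n m → KEqS Γ b c n m → KEqS Γ a c n m
  | one (n : T) : KEqS Γ .one .one n n
  | zero (n m : T) : KEqS Γ .zero .zero n m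
  | mul {a a' b b' : KTerm X} {n m p : T} :
      KEqS Γ a a' n m → KEqS Γ b b' m p → KEqS Γ (.mul a b) (.mul a' b') n p
  | add {a a' b b' : KTerm X} {n m : T} :
      KEqS Γ a a' n m → KEqS Γ b b' n m → KEqS Γ (.add a b) (.add a' b') n m
  | star {a b : KTerm X} {n : T} : KEqS Γ a b n n → KEqS Γ (.star a) (.star b) n n
  | one_mul {a : KTerm X} {n m : T} : KTyp Γ a n m → KEqS Γ (.mul .one a) a n m
  | mul_one {a : KTerm X} {n m : T} : KTyp Γ a n m → KEqS Γ (.mul a .one) a n m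
  | mul_assoc {a b c : KTerm X} {n m p q : T} :
      KTyp Γ a n m → KTyp Γ b m p → KTyp Γ c p q →
      KEqS Γ (.mul (.mul a b) c) (.mul a (.mul b c)) n q
  | add_zero {a : KTerm X} {n m : T} : KTyp Γ a n m → KEqS Γ (.add a .zero) a n m
  | add_comm {a b : KTerm X} {n m : T} :
      KTyp Γ a n m → KTyp Γ b n m → KEqS Γ (.add a b) (.add b a) n m
  | add_assoc {a b c : KTerm X} {n m : T} :
      KTyp Γ a n m → KTyp Γ b n m → KTyp Γ c n m →
      KEqS Γ (.add (.add a b) c) (.add a (.add b c)) n m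
  | mul_add {a b c : KTerm X} {n m p : T} :
      KTyp Γ a n m → KTyp Γ b m p → KTyp Γ c m p → a.norm ≠ .zero →
      KEqS Γ (.mul a (.add b c)) (.add (.mul a b) (.mul a c)) n p
  | add_mul {a b c : KTerm X} {n m p : T} :
      KTyp Γ a n m → KTyp Γ b p n → KTyp Γ c p n → a.norm ≠ .zero →
      KEqS Γ (.mul (.add b c) a) (.add (.mul b a) (.mul c a)) p m
  | add_idem {a : KTerm X} {n m : T} : KTyp Γ a n m → KEqS Γ (.add a a) a n m
  | star_unfold {a : KTerm X} {n : T} :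
      KTyp Γ a n n → KEqS Γ (.add .one (.mul a (.star a))) (.star a) n n
  | star_ind_l {a b : KTerm X} {n m : T} :
      KEqS Γ (.add (.mul a b) b) b n m → b.norm ≠ .zero →
      KEqS Γ (.add (.mul (.star a) b) b) b n m
  | star_ind_r {a b : KTerm X} {n m : T} :
      KEqS Γ (.add (.mul b a) b) b n m → b.norm ≠ .zero →
      KEqS Γ (.add (.mul b (.star a)) b) b n m

/-!
Send a term `a` to the relation `KTyp Γ a` on objects. Product becomes relational composition, sum
becomes intersection, and `a*` becomes the part of `a` on the diagonal. Every axiom of strict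
equality is then an identity of relations. Distributivity and star induction hold because the
relation of a strict term is a partial injection: only an occurrence of `0` lets one end of a type
vary independently of the other, and strictness means that such an occurrence either is
constrained by a summand or sits under a star.
-/

open Relation Relator

local infixr:80 " ∘r " => Relation.Comp

section Relations

variable {α β γ : Type*}

theorem biUnique_eq : BiUnique (@Eq α) :=
  ⟨fun _ _ _ h h' => h.trans h'.symm, fun _ _ _ h h' => h.symm.trans h'⟩

theorem biUnique_mono {r s : α → β → Prop} (hrs : r ≤ s) (hs : BiUnique s) : BiUnique r :=
  ⟨fun _ _ _ h h' => hs.1 (hrs _ _ h) (hrs _ _ h'), fun _ _ _ h h' => hs.2 (hrs _ _ h) (hrs _ _ h')⟩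

theorem biUnique_comp {r : α → β → Prop} {s : β → γ → Prop} (hr : BiUnique r) (hs : BiUnique s) :
    BiUnique (r ∘r s) := by
  constructor
  · rintro a a' c ⟨b, hab, hbc⟩ ⟨b', hab', hbc'⟩
    obtain rfl := hs.1 hbc hbc'
    exact hr.1 hab hab'
  · rintro a c c' ⟨b, hab, hbc⟩ ⟨b', hab', hbc'⟩
    obtain rfl := hr.2 hab hab'
    exact hs.2 hbc hbc'

theorem comp_inf_of_rightUnique {r : α → β → Prop} (hr : RightUnique r) (s t : β → γ → Prop) :
    r ∘r (s ⊓ t) = (r ∘r s) ⊓ (r ∘r t) := by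
  ext a c
  constructor
  · rintro ⟨b, hab, hs, ht⟩
    exact ⟨⟨b, hab, hs⟩, b, hab, ht⟩
  · rintro ⟨⟨b, hab, hs⟩, b', hab', ht⟩
    obtain rfl := hr hab hab'
    exact ⟨b, hab, hs, ht⟩

theorem inf_comp_of_leftUnique {t : β → γ → Prop} (ht : LeftUnique t) (r s : α → β → Prop) :
    (r ⊓ s) ∘r t = (r ∘r t) ⊓ (s ∘r t) := by
  ext a c
  constructor
  · rintro ⟨b, ⟨hr, hs⟩, hbc⟩
    exact ⟨⟨b, hr, hbc⟩, b, hs, hbc⟩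
  · rintro ⟨⟨b, hr, hbc⟩, b', hs, hbc'⟩
    obtain rfl := ht hbc hbc'
    exact ⟨b, ⟨hr, hs⟩, hbc⟩

theorem eq_inf_comp_eq_inf (r : α → α → Prop) : Eq ⊓ (r ∘r (Eq ⊓ r)) = Eq ⊓ r := by
  ext a b
  constructor
  · rintro ⟨rfl, c, hac, rfl, -⟩
    exact ⟨rfl, hac⟩
  · rintro ⟨rfl, haa⟩
    exact ⟨rfl, a, haa, rfl, haa⟩

theorem eq_inf_comp_of_leftUnique {s : α → β → Prop} (hs : LeftUnique s) (r : α → α → Prop) :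
    (Eq ⊓ r) ∘r s = (r ∘r s) ⊓ s := by
  rw [inf_comp_of_leftUnique hs, eq_comp, inf_comm]

theorem comp_eq_inf_of_rightUnique {s : α → β → Prop} (hs : RightUnique s) (r : β → β → Prop) :
    s ∘r (Eq ⊓ r) = (s ∘r r) ⊓ s := by
  rw [comp_inf_of_rightUnique hs, comp_eq, inf_comm]

end Relations

namespace KTerm

variable {X : Type}

theorem norm_mul_eq_zero_iff {a b : KTerm X} :
    (mul a b).norm = zero ↔ a.norm = zero ∨ b.norm = zero := by
  cases ha : a.norm <;> cases hb : b.norm <;> simp [norm, ha, hb]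

theorem norm_add_eq_zero_iff {a b : KTerm X} :
    (add a b).norm = zero ↔ a.norm = zero ∧ b.norm = zero := by
  cases ha : a.norm <;> cases hb : b.norm <;> simp [norm, ha, hb]

end KTerm

namespace KTyp

variable {X T : Type} {Γ : X → T × T} {a b : KTerm X}

theorem var_eq (x : X) : KTyp Γ (.var x) = fun n m => Γ x = (n, m) := by
  ext n m
  exact ⟨fun h => by cases h with | var _ _ _ hx => exact hx, .var x n m⟩

theorem one_eq : KTyp Γ .one = Eq := by
  ext n m
  exact ⟨fun h => by cases h; rfl, fun h => h ▸ .one n⟩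

theorem zero_eq : KTyp Γ .zero = ⊤ := by
  ext n m
  exact ⟨fun _ => trivial, fun _ => .zero n m⟩

theorem mul_eq : KTyp Γ (.mul a b) = KTyp Γ a ∘r KTyp Γ b := by
  ext n m
  exact ⟨fun h => by cases h with | mul ha hb => exact ⟨_, ha, hb⟩,
    fun ⟨_, ha, hb⟩ => .mul ha hb⟩

theorem add_eq : KTyp Γ (.add a b) = KTyp Γ a ⊓ KTyp Γ b := by
  ext n m
  exact ⟨fun h => by cases h with | add ha hb => exact ⟨ha, hb⟩,
    fun ⟨ha, hb⟩ => .add ha hb⟩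

theorem star_eq : KTyp Γ (.star a) = Eq ⊓ KTyp Γ a := by
  ext n m
  exact ⟨fun h => by cases h with | star ha => exact ⟨rfl, ha⟩,
    by rintro ⟨rfl, ha⟩; exact .star ha⟩

variable (Γ) in
theorem biUnique_of_norm_ne_zero (ha : a.norm ≠ .zero) : BiUnique (KTyp Γ a) := by
  induction a with
  | var x =>
    rw [var_eq]
    exact ⟨fun _ _ _ h h' => congrArg Prod.fst (h.symm.trans h'),
      fun _ _ _ h h' => congrArg Prod.snd (h.symm.trans h')⟩
  | one =>
    rw [one_eq]
    exact biUnique_eq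
  | zero => exact absurd rfl ha
  | mul a b iha ihb =>
    rw [Ne, KTerm.norm_mul_eq_zero_iff, not_or] at ha
    rw [mul_eq]
    exact biUnique_comp (iha ha.1) (ihb ha.2)
  | add a b iha ihb =>
    rw [Ne, KTerm.norm_add_eq_zero_iff, not_and_or] at ha
    rw [add_eq]
    exact ha.elim (fun ha => biUnique_mono inf_le_left (iha ha))
      (fun hb => biUnique_mono inf_le_right (ihb hb))
  | star a =>
    rw [star_eq]
    exact biUnique_mono inf_le_left biUnique_eq

end KTyp

open KTyp in
theorem kleene_strict_eq_preserves_types_general {X T U : Type} (Γ : X → T × T) {Δ : X → U × U}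
    {a b : KTerm X} {u v : U} (h : KEqS Δ a b u v) : KTyp Γ a = KTyp Γ b := by
  induction h with
  | var | one | zero => rfl
  | symm _ ih => exact ih.symm
  | trans _ _ ihab ihbc => exact ihab.trans ihbc
  | mul _ _ iha ihb => rw [mul_eq, mul_eq, iha, ihb]
  | add _ _ iha ihb => rw [add_eq, add_eq, iha, ihb]
  | star _ ih => rw [star_eq, star_eq, ih]
  | one_mul => rw [mul_eq, one_eq, eq_comp]
  | mul_one => rw [mul_eq, one_eq, comp_eq]
  | mul_assoc => simp only [mul_eq, comp_assoc]
  | add_zero => rw [add_eq, zero_eq, inf_top_eq]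
  | add_comm => rw [add_eq, add_eq, inf_comm]
  | add_assoc => simp only [add_eq, inf_assoc]
  | mul_add _ _ _ ha =>
    simp only [mul_eq, add_eq, comp_inf_of_rightUnique (biUnique_of_norm_ne_zero Γ ha).2]
  | add_mul _ _ _ ha =>
    simp only [mul_eq, add_eq, inf_comp_of_leftUnique (biUnique_of_norm_ne_zero Γ ha).1]
  | add_idem => rw [add_eq, inf_idem]
  | star_unfold => rw [add_eq, mul_eq, one_eq, star_eq, eq_inf_comp_eq_inf]
  | star_ind_l _ hb ih =>
    rw [add_eq, mul_eq] at ih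
    rw [add_eq, mul_eq, star_eq, eq_inf_comp_of_leftUnique (biUnique_of_norm_ne_zero Γ hb).1, ih,
      inf_idem]
  | star_ind_r _ hb ih =>
    rw [add_eq, mul_eq] at ih
    rw [add_eq, mul_eq, star_eq, comp_eq_inf_of_rightUnique (biUnique_of_norm_ne_zero Γ hb).2, ih,
      inf_idem]

/-- In typed Kleene algebras, if the untyped strict equality `⊢ a =⁺ b` is derivable
(i.e. the strict equality over the singleton set of objects), then for all objects
`n,m`, `a : n→m` is derivable iff `b : n→m` is derivable. -/
theorem kleene_strict_eq_preserves_types {X T : Type} (Γ : X → T × T)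
    (a b : KTerm X) :
    KEqS (fun _ : X => ((), ())) a b () () →
    ∀ n m : T, KTyp Γ a n m ↔ KTyp Γ b n m := by
  intro h n m
  rw [kleene_strict_eq_preserves_types_general Γ h]
end

section
/- Untyping theorem for Kleene algebras: for all terms a,b and objects n,m such that a : n→m and b : n→m are derivable in environment Γ, the untyped equality ⊢ a = b is derivable if and only if the typed equality a = b : n→m is derivable in Γ. -/
/-- Typed equality judgement for typed Kleene algebras, in environment `Γ`.
`a ≤ b : n→m` abbreviates `a+b = b : n→m`. -/
inductive KEq {X T : Type} (Γ : X → T × T) : KTerm X → KTerm X → T → T → Prop where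
  | var (x : X) (n m : T) : Γ x = (n, m) → KEq Γ (.var x) (.var x) n m
  | symm {a b : KTerm X} {n m : T} : KEq Γ a b n m → KEq Γ b a n m
  | trans {a b c : KTerm X} {n m : T} :
      KEq Γ a b n m → KEq Γ b c n m → KEq Γ a c n m
  | one (n : T) : KEq Γ .one .one n n
  | zero (n m : T) : KEq Γ .zero .zero n m
  | mul {a a' b b' : KTerm X} {n m p : T} :
      KEq Γ a a' n m → KEq Γ b b' m p → KEq Γ (.mul a b) (.mul a' b') n p
  | add {a a' b b' : KTerm X} {n m : T} :
      KEq Γ a a' n m → KEq Γ b b' n m → KEq Γ (.add a b) (.add a' b') n m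
  | star {a b : KTerm X} {n : T} : KEq Γ a b n n → KEq Γ (.star a) (.star b) n n
  | one_mul {a : KTerm X} {n m : T} : KTyp Γ a n m → KEq Γ (.mul .one a) a n m
  | mul_one {a : KTerm X} {n m : T} : KTyp Γ a n m → KEq Γ (.mul a .one) a n m
  | mul_assoc {a b c : KTerm X} {n m p q : T} :
      KTyp Γ a n m → KTyp Γ b m p → KTyp Γ c p q →
      KEq Γ (.mul (.mul a b) c) (.mul a (.mul b c)) n q
  | add_zero {a : KTerm X} {n m : T} : KTyp Γ a n m → KEq Γ (.add a .zero) a n m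
  | add_comm {a b : KTerm X} {n m : T} :
      KTyp Γ a n m → KTyp Γ b n m → KEq Γ (.add a b) (.add b a) n m
  | add_assoc {a b c : KTerm X} {n m : T} :
      KTyp Γ a n m → KTyp Γ b n m → KTyp Γ c n m →
      KEq Γ (.add (.add a b) c) (.add a (.add b c)) n m
  | mul_add {a b c : KTerm X} {n m p : T} :
      KTyp Γ a n m → KTyp Γ b m p → KTyp Γ c m p →
      KEq Γ (.mul a (.add b c)) (.add (.mul a b) (.mul a c)) n p
  | add_mul {a b c : KTerm X} {n m p : T} :
      KTyp Γ a n m → KTyp Γ b p n → KTyp Γ c p n →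
      KEq Γ (.mul (.add b c) a) (.add (.mul b a) (.mul c a)) p m
  | mul_zero {a : KTerm X} {n m p : T} : KTyp Γ a n m → KEq Γ (.mul a .zero) .zero n p
  | zero_mul {a : KTerm X} {n m p : T} : KTyp Γ a n m → KEq Γ (.mul .zero a) .zero p m
  | add_idem {a : KTerm X} {n m : T} : KTyp Γ a n m → KEq Γ (.add a a) a n m
  | star_unfold {a : KTerm X} {n : T} :
      KTyp Γ a n n → KEq Γ (.add .one (.mul a (.star a))) (.star a) n n
  | star_ind_l {a b : KTerm X} {n m : T} :
      KEq Γ (.add (.mul a b) b) b n m →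
      KEq Γ (.add (.mul (.star a) b) b) b n m
  | star_ind_r {a b : KTerm X} {n m : T} :
      KEq Γ (.add (.mul b a) b) b n m →
      KEq Γ (.add (.mul b (.star a)) b) b n m

/-!
Forgetting the types turns a typed derivation into an untyped one. Conversely, an untyped derivation
may go through untypable terms, as in `(x+y)·0 = 0` with `x` and `y` of different types, and the
only source of this is that `0` has all types at once. A normal form `⌊a⌋` is either `0` or free of
`0`, and in a zero-free term the source determines the target and vice versa. Hence, on normal
forms, every rule of the untyped equality preserves typability and can be replayed at each type:
distributivity read from right to left does not confuse two different middle objects, and in the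
star induction rules `a·b ≤ b` with `b ≠ 0` forces `a` to be square. Finally, a typable term is
equal to its normal form.
-/

section

variable {X S T : Type} {Γ : X → T × T} {a a' b b' c : KTerm X} {n n' m m' p : T}

theorem KTyp.map (f : T → S) (h : KTyp Γ a n m) : KTyp (Prod.map f f ∘ Γ) a (f n) (f m) := by
  induction h with
  | var x n m hx => exact .var x _ _ (by simp [hx])
  | one n => exact .one _
  | zero n m => exact .zero _ _
  | mul _ _ iha ihb => exact .mul iha ihb
  | add _ _ iha ihb => exact .add iha ihb
  | star _ ih => exact .star ih

theorem KEq.map (f : T → S) (h : KEq Γ a b n m) : KEq (Prod.map f f ∘ Γ) a b (f n) (f m) := by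
  induction h with
  | var x n m hx => exact .var x _ _ (by simp [hx])
  | symm _ ih => exact .symm ih
  | trans _ _ ih ih' => exact .trans ih ih'
  | one n => exact .one _
  | zero n m => exact .zero _ _
  | mul _ _ iha ihb => exact .mul iha ihb
  | add _ _ iha ihb => exact .add iha ihb
  | star _ ih => exact .star ih
  | one_mul ha => exact .one_mul (ha.map f)
  | mul_one ha => exact .mul_one (ha.map f)
  | mul_assoc ha hb hc => exact .mul_assoc (ha.map f) (hb.map f) (hc.map f)
  | add_zero ha => exact .add_zero (ha.map f)
  | add_comm ha hb => exact .add_comm (ha.map f) (hb.map f)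
  | add_assoc ha hb hc => exact .add_assoc (ha.map f) (hb.map f) (hc.map f)
  | mul_add ha hb hc => exact .mul_add (ha.map f) (hb.map f) (hc.map f)
  | add_mul ha hb hc => exact .add_mul (ha.map f) (hb.map f) (hc.map f)
  | mul_zero ha => exact .mul_zero (ha.map f)
  | zero_mul ha => exact .zero_mul (ha.map f)
  | add_idem ha => exact .add_idem (ha.map f)
  | star_unfold ha => exact .star_unfold (ha.map f)
  | star_ind_l _ ih => exact .star_ind_l ih
  | star_ind_r _ ih => exact .star_ind_r ih

protected theorem KEq.refl (h : KTyp Γ a n m) : KEq Γ a a n m := by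
  induction h with
  | var x n m hx => exact .var x n m hx
  | one n => exact .one n
  | zero n m => exact .zero n m
  | mul _ _ iha ihb => exact .mul iha ihb
  | add _ _ iha ihb => exact .add iha ihb
  | star _ ih => exact .star ih

theorem KEq.zero_add (h : KTyp Γ a n m) : KEq Γ (.add .zero a) a n m :=
  .trans (.add_comm (.zero n m) h) (.add_zero h)

theorem KEq.star_zero (n : T) : KEq Γ (.star .zero) .one n n :=
  .trans (.symm (.star_unfold (.zero n n)))
    (.trans (.add (.one n) (.zero_mul (.star (.zero n n)))) (.add_zero (.one n)))

namespace KTerm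

theorem norm_one_ne_zero : (one : KTerm X).norm ≠ .zero :=
  nofun

theorem norm_mul_eq_zero : (mul a b).norm = .zero ↔ a.norm = .zero ∨ b.norm = .zero := by
  grind [KTerm.norm]

theorem norm_add_eq_zero : (add a b).norm = .zero ↔ a.norm = .zero ∧ b.norm = .zero := by
  grind [KTerm.norm]

theorem norm_star_ne_zero : (star a).norm ≠ .zero := by
  grind [KTerm.norm]

theorem norm_mul_of_ne_zero (ha : a.norm ≠ .zero) (hb : b.norm ≠ .zero) :
    (mul a b).norm = .mul a.norm b.norm := by
  grind [KTerm.norm]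

theorem norm_add_of_left_eq_zero (ha : a.norm = .zero) : (add a b).norm = b.norm := by
  grind [KTerm.norm]

theorem norm_add_of_right_eq_zero (hb : b.norm = .zero) : (add a b).norm = a.norm := by
  grind [KTerm.norm]

theorem norm_add_of_ne_zero (ha : a.norm ≠ .zero) (hb : b.norm ≠ .zero) :
    (add a b).norm = .add a.norm b.norm := by
  grind [KTerm.norm]

theorem norm_star_of_eq_zero (ha : a.norm = .zero) : (star a).norm = .one := by
  grind [KTerm.norm]

theorem norm_star_of_ne_zero (ha : a.norm ≠ .zero) : (star a).norm = .star a.norm := by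
  grind [KTerm.norm]

end KTerm

open KTerm

namespace KTyp

theorem one_iff : KTyp Γ .one n m ↔ n = m :=
  ⟨fun | .one _ => rfl, fun h => h ▸ .one n⟩

theorem of_eq_zero (ha : a = .zero) : KTyp Γ a n m :=
  ha ▸ .zero n m

theorem norm_mul_iff : KTyp Γ (KTerm.mul a b).norm n p ↔
    a.norm = .zero ∨ b.norm = .zero ∨ ∃ m, KTyp Γ a.norm n m ∧ KTyp Γ b.norm m p := by
  by_cases h : a.norm = .zero ∨ b.norm = .zero
  · exact iff_of_true (of_eq_zero (norm_mul_eq_zero.2 h)) (or_assoc.1 (.inl h))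
  · obtain ⟨ha, hb⟩ := not_or.1 h
    simp only [norm_mul_of_ne_zero ha hb, ha, hb, false_or]
    exact ⟨fun | .mul ta tb => ⟨_, ta, tb⟩, fun ⟨_, ta, tb⟩ => .mul ta tb⟩

theorem norm_add_iff :
    KTyp Γ (KTerm.add a b).norm n m ↔ KTyp Γ a.norm n m ∧ KTyp Γ b.norm n m := by
  by_cases ha : a.norm = .zero
  · simp [norm_add_of_left_eq_zero ha, of_eq_zero ha]
  by_cases hb : b.norm = .zero
  · simp [norm_add_of_right_eq_zero hb, of_eq_zero hb]
  rw [norm_add_of_ne_zero ha hb]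
  exact ⟨fun | .add ta tb => ⟨ta, tb⟩, fun ⟨ta, tb⟩ => .add ta tb⟩

theorem norm_star_iff : KTyp Γ (KTerm.star a).norm n m ↔ n = m ∧ KTyp Γ a.norm n n := by
  by_cases ha : a.norm = .zero
  · simp [norm_star_of_eq_zero ha, of_eq_zero ha, one_iff]
  rw [norm_star_of_ne_zero ha]
  exact ⟨fun | .star ta => ⟨rfl, ta⟩, fun ⟨e, ta⟩ => e ▸ .star ta⟩

theorem norm_mul (ha : KTyp Γ a.norm n m) (hb : KTyp Γ b.norm m p) :
    KTyp Γ (KTerm.mul a b).norm n p :=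
  norm_mul_iff.2 (.inr (.inr ⟨m, ha, hb⟩))

theorem norm_add (ha : KTyp Γ a.norm n m) (hb : KTyp Γ b.norm n m) :
    KTyp Γ (KTerm.add a b).norm n m :=
  norm_add_iff.2 ⟨ha, hb⟩

theorem norm_star (ha : KTyp Γ a.norm n n) : KTyp Γ (KTerm.star a).norm n n :=
  norm_star_iff.2 ⟨rfl, ha⟩

theorem exists_of_norm_mul (ha : a.norm ≠ .zero) (hb : b.norm ≠ .zero)
    (h : KTyp Γ (KTerm.mul a b).norm n p) :
    ∃ m, KTyp Γ a.norm n m ∧ KTyp Γ b.norm m p := by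
  simpa only [norm_mul_iff, ha, hb, false_or] using h

theorem norm_source_eq_iff_target_eq (ha : a.norm ≠ .zero)
    (h : KTyp Γ a.norm n m) (h' : KTyp Γ a.norm n' m') : n = n' ↔ m = m' := by
  induction a generalizing n m n' m' with
  | var x =>
    cases h with | var _ _ _ hx =>
    cases h' with | var _ _ _ hx' =>
    cases hx.symm.trans hx'
    simp
  | one => rw [← one_iff.1 h, ← one_iff.1 h']
  | zero => exact absurd rfl ha
  | mul a b iha ihb =>
    obtain ⟨ha, hb⟩ := not_or.1 (mt norm_mul_eq_zero.2 ha)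
    obtain ⟨_, ta, tb⟩ := exists_of_norm_mul ha hb h
    obtain ⟨_, ta', tb'⟩ := exists_of_norm_mul ha hb h'
    exact (iha ha ta ta').trans (ihb hb tb tb')
  | add a b iha ihb =>
    obtain ⟨ta, tb⟩ := norm_add_iff.1 h
    obtain ⟨ta', tb'⟩ := norm_add_iff.1 h'
    rcases not_and_or.1 (mt norm_add_eq_zero.2 ha) with ha | hb
    · exact iha ha ta ta'
    · exact ihb hb tb tb'
  | star a _ => rw [← (norm_star_iff.1 h).1, ← (norm_star_iff.1 h').1]

theorem norm_left_of_norm_mul (hb : b.norm ≠ .zero) (h : KTyp Γ (KTerm.mul a b).norm n m)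
    (tb : KTyp Γ b.norm n m) : KTyp Γ a.norm n n := by
  by_cases ha : a.norm = .zero
  · exact of_eq_zero ha
  obtain ⟨k, ta, tb'⟩ := exists_of_norm_mul ha hb h
  rwa [← (norm_source_eq_iff_target_eq hb tb tb').2 rfl] at ta

theorem norm_right_of_norm_mul (hb : b.norm ≠ .zero) (h : KTyp Γ (KTerm.mul b a).norm n m)
    (tb : KTyp Γ b.norm n m) : KTyp Γ a.norm m m := by
  by_cases ha : a.norm = .zero
  · exact of_eq_zero ha
  obtain ⟨k, tb', ta⟩ := exists_of_norm_mul hb ha h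
  rwa [← (norm_source_eq_iff_target_eq hb tb tb').1 rfl] at ta

theorem exists_common_of_norm_mul_left (ha : a.norm ≠ .zero)
    (hbc : (KTerm.add b c).norm ≠ .zero)
    (hb : KTyp Γ (KTerm.mul a b).norm n p) (hc : KTyp Γ (KTerm.mul a c).norm n p) :
    ∃ m, KTyp Γ a.norm n m ∧ KTyp Γ b.norm m p ∧ KTyp Γ c.norm m p := by
  by_cases b0 : b.norm = .zero
  · have c0 : c.norm ≠ .zero := fun c0 => hbc (norm_add_eq_zero.2 ⟨b0, c0⟩)
    obtain ⟨m, ta, tc⟩ := exists_of_norm_mul ha c0 hc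
    exact ⟨m, ta, of_eq_zero b0, tc⟩
  obtain ⟨m, ta, tb⟩ := exists_of_norm_mul ha b0 hb
  by_cases c0 : c.norm = .zero
  · exact ⟨m, ta, tb, of_eq_zero c0⟩
  obtain ⟨k, ta', tc⟩ := exists_of_norm_mul ha c0 hc
  rw [← (norm_source_eq_iff_target_eq ha ta ta').1 rfl] at tc
  exact ⟨m, ta, tb, tc⟩

theorem exists_common_of_norm_mul_right (ha : a.norm ≠ .zero)
    (hbc : (KTerm.add b c).norm ≠ .zero)
    (hb : KTyp Γ (KTerm.mul b a).norm n p) (hc : KTyp Γ (KTerm.mul c a).norm n p) :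
    ∃ m, KTyp Γ b.norm n m ∧ KTyp Γ c.norm n m ∧ KTyp Γ a.norm m p := by
  by_cases b0 : b.norm = .zero
  · have c0 : c.norm ≠ .zero := fun c0 => hbc (norm_add_eq_zero.2 ⟨b0, c0⟩)
    obtain ⟨m, tc, ta⟩ := exists_of_norm_mul c0 ha hc
    exact ⟨m, of_eq_zero b0, tc, ta⟩
  obtain ⟨m, tb, ta⟩ := exists_of_norm_mul b0 ha hb
  by_cases c0 : c.norm = .zero
  · exact ⟨m, tb, of_eq_zero c0, ta⟩
  obtain ⟨k, tc, ta'⟩ := exists_of_norm_mul c0 ha hc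
  rw [← (norm_source_eq_iff_target_eq ha ta ta').2 rfl] at tc
  exact ⟨m, tb, tc, ta⟩

theorem norm (h : KTyp Γ a n m) : KTyp Γ a.norm n m := by
  induction h with
  | var x n m hx => exact .var x n m hx
  | one n => exact .one n
  | zero n m => exact .zero n m
  | mul _ _ iha ihb => exact norm_mul iha ihb
  | add _ _ iha ihb => exact norm_add iha ihb
  | star _ ih => exact norm_star ih

end KTyp

namespace KEq

theorem norm_mul (ha : KTyp Γ a.norm n m) (hb : KTyp Γ b.norm m p) :
    KEq Γ (KTerm.mul a b).norm (.mul a.norm b.norm) n p := by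
  by_cases a0 : a.norm = .zero
  · rw [norm_mul_eq_zero.2 (.inl a0), a0]
    exact .symm (.zero_mul hb)
  by_cases b0 : b.norm = .zero
  · rw [norm_mul_eq_zero.2 (.inr b0), b0]
    exact .symm (.mul_zero ha)
  rw [norm_mul_of_ne_zero a0 b0]
  exact .refl (.mul ha hb)

theorem norm_add (ha : KTyp Γ a.norm n m) (hb : KTyp Γ b.norm n m) :
    KEq Γ (KTerm.add a b).norm (a.norm.add b.norm) n m := by
  by_cases a0 : a.norm = .zero
  · rw [norm_add_of_left_eq_zero a0, a0]
    exact .symm (zero_add hb)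
  by_cases b0 : b.norm = .zero
  · rw [norm_add_of_right_eq_zero b0, b0]
    exact .symm (.add_zero ha)
  rw [norm_add_of_ne_zero a0 b0]
  exact .refl (.add ha hb)

theorem norm_star (ha : KTyp Γ a.norm n n) :
    KEq Γ (KTerm.star a).norm (.star a.norm) n n := by
  by_cases a0 : a.norm = .zero
  · rw [norm_star_of_eq_zero a0, a0]
    exact .symm (star_zero n)
  rw [norm_star_of_ne_zero a0]
  exact .refl (.star ha)

theorem norm_mul_congr (ha : KTyp Γ a.norm n m) (hb : KTyp Γ b.norm m p)
    (h : KEq Γ a.norm a' n m) (k : KEq Γ b.norm b' m p) :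
    KEq Γ (KTerm.mul a b).norm (.mul a' b') n p :=
  .trans (norm_mul ha hb) (.mul h k)

theorem norm_add_congr (ha : KTyp Γ a.norm n m) (hb : KTyp Γ b.norm n m)
    (h : KEq Γ a.norm a' n m) (k : KEq Γ b.norm b' n m) :
    KEq Γ (KTerm.add a b).norm (.add a' b') n m :=
  .trans (norm_add ha hb) (.add h k)

theorem norm_star_congr (ha : KTyp Γ a.norm n n) (h : KEq Γ a.norm a' n n) :
    KEq Γ (KTerm.star a).norm (.star a') n n :=
  .trans (norm_star ha) (.star h)

theorem norm_eq (h : KTyp Γ a n m) : KEq Γ a.norm a n m := by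
  induction h with
  | var x n m hx => exact .var x n m hx
  | one n => exact .one n
  | zero n m => exact .zero n m
  | mul ha hb iha ihb => exact norm_mul_congr ha.norm hb.norm iha ihb
  | add ha hb iha ihb => exact norm_add_congr ha.norm hb.norm iha ihb
  | star ha ih => exact norm_star_congr ha.norm ih

end KEq

/-- The invariant of untyped derivations: the normal forms `⌊a⌋` and `⌊b⌋` have the same types in
`Γ` and are equal at each of them. That they vanish simultaneously is a separate clause because
types do not detect `0` (when `T` is a singleton, every term has every type), while the typing of
`⌊a·b⌋` depends on whether `⌊a⌋` or `⌊b⌋` is `0`. -/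
structure NormEquiv (Γ : X → T × T) (a b : KTerm X) : Prop where
  norm_eq_zero_iff : a.norm = .zero ↔ b.norm = .zero
  typ_iff : ∀ n m, KTyp Γ a.norm n m ↔ KTyp Γ b.norm n m
  keq : ∀ n m, KTyp Γ a.norm n m → KEq Γ a.norm b.norm n m

namespace NormEquiv

theorem of_eq_zero (ha : a.norm = .zero) (hb : b.norm = .zero) : NormEquiv Γ a b where
  norm_eq_zero_iff := iff_of_true ha hb
  typ_iff _ _ := by rw [ha, hb]
  keq n m _ := by rw [ha, hb]; exact .zero n m

protected theorem refl (a : KTerm X) : NormEquiv Γ a a :=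
  ⟨.rfl, fun _ _ => .rfl, fun _ _ => .refl⟩

protected theorem symm (h : NormEquiv Γ a b) : NormEquiv Γ b a where
  norm_eq_zero_iff := h.norm_eq_zero_iff.symm
  typ_iff n m := (h.typ_iff n m).symm
  keq n m t := .symm (h.keq n m ((h.typ_iff n m).2 t))

protected theorem trans (h : NormEquiv Γ a b) (k : NormEquiv Γ b c) : NormEquiv Γ a c where
  norm_eq_zero_iff := h.norm_eq_zero_iff.trans k.norm_eq_zero_iff
  typ_iff n m := (h.typ_iff n m).trans (k.typ_iff n m)
  keq n m t := .trans (h.keq n m t) (k.keq n m ((h.typ_iff n m).1 t))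

theorem of_imp (hz : a.norm = .zero ↔ b.norm = .zero)
    (h : ∀ n m, KTyp Γ a.norm n m → KTyp Γ b.norm n m ∧ KEq Γ a.norm b.norm n m)
    (h' : ∀ n m, KTyp Γ b.norm n m → KTyp Γ a.norm n m) : NormEquiv Γ a b :=
  ⟨hz, fun n m => ⟨fun t => (h n m t).1, h' n m⟩, fun n m t => (h n m t).2⟩

theorem mul (h : NormEquiv Γ a a') (k : NormEquiv Γ b b') :
    NormEquiv Γ (.mul a b) (.mul a' b') where
  norm_eq_zero_iff := by simp only [norm_mul_eq_zero, h.norm_eq_zero_iff, k.norm_eq_zero_iff]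
  typ_iff n p := by
    simp only [KTyp.norm_mul_iff, h.norm_eq_zero_iff, k.norm_eq_zero_iff, h.typ_iff, k.typ_iff]
  keq n p t := by
    by_cases z : a.norm = .zero ∨ b.norm = .zero
    · rw [norm_mul_eq_zero.2 z,
        norm_mul_eq_zero.2 (z.imp h.norm_eq_zero_iff.1 k.norm_eq_zero_iff.1)]
      exact .zero n p
    obtain ⟨ha, hb⟩ := not_or.1 z
    obtain ⟨m, ta, tb⟩ := t.exists_of_norm_mul ha hb
    exact .trans (.norm_mul_congr ta tb (h.keq n m ta) (k.keq m p tb))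
      (.symm (.norm_mul ((h.typ_iff n m).1 ta) ((k.typ_iff m p).1 tb)))

theorem add (h : NormEquiv Γ a a') (k : NormEquiv Γ b b') :
    NormEquiv Γ (.add a b) (.add a' b') where
  norm_eq_zero_iff := by simp only [norm_add_eq_zero, h.norm_eq_zero_iff, k.norm_eq_zero_iff]
  typ_iff n m := by simp only [KTyp.norm_add_iff, h.typ_iff, k.typ_iff]
  keq n m t := by
    obtain ⟨ta, tb⟩ := KTyp.norm_add_iff.1 t
    exact .trans (.norm_add_congr ta tb (h.keq n m ta) (k.keq n m tb))
      (.symm (.norm_add ((h.typ_iff n m).1 ta) ((k.typ_iff n m).1 tb)))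

theorem star (h : NormEquiv Γ a b) : NormEquiv Γ (.star a) (.star b) where
  norm_eq_zero_iff := iff_of_false norm_star_ne_zero norm_star_ne_zero
  typ_iff n m := by simp only [KTyp.norm_star_iff, h.typ_iff]
  keq n m t := by
    obtain ⟨rfl, ta⟩ := KTyp.norm_star_iff.1 t
    exact .trans (.norm_star_congr ta (h.keq n n ta)) (.symm (.norm_star ((h.typ_iff n n).1 ta)))

variable (a b c)

theorem one_mul : NormEquiv Γ (.mul .one a) a := by
  by_cases ha : a.norm = .zero
  · exact of_eq_zero (norm_mul_eq_zero.2 (.inr ha)) ha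
  refine of_imp (by simp only [norm_mul_eq_zero, norm_one_ne_zero, false_or]) ?_
    fun n m ta => .norm_mul (.one n) ta
  intro n m t
  obtain ⟨_, t1, ta⟩ := t.exists_of_norm_mul norm_one_ne_zero ha
  obtain rfl := KTyp.one_iff.1 t1
  exact ⟨ta, .trans (.norm_mul t1 ta) (.one_mul ta)⟩

theorem mul_one : NormEquiv Γ (.mul a .one) a := by
  by_cases ha : a.norm = .zero
  · exact of_eq_zero (norm_mul_eq_zero.2 (.inl ha)) ha
  refine of_imp (by simp only [norm_mul_eq_zero, norm_one_ne_zero, or_false]) ?_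
    fun n m ta => .norm_mul ta (.one m)
  intro n m t
  obtain ⟨_, ta, t1⟩ := t.exists_of_norm_mul ha norm_one_ne_zero
  obtain rfl := KTyp.one_iff.1 t1
  exact ⟨ta, .trans (.norm_mul ta t1) (.mul_one ta)⟩

theorem mul_assoc : NormEquiv Γ (.mul (.mul a b) c) (.mul a (.mul b c)) := by
  have hz : (KTerm.mul (.mul a b) c).norm = .zero ↔ (KTerm.mul a (.mul b c)).norm = .zero := by
    simp only [norm_mul_eq_zero, or_assoc]
  by_cases z : (KTerm.mul (.mul a b) c).norm = .zero
  · exact of_eq_zero z (hz.1 z)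
  obtain ⟨hab, hc⟩ := not_or.1 (mt norm_mul_eq_zero.2 z)
  obtain ⟨ha, hbc⟩ := not_or.1 (mt norm_mul_eq_zero.2 (mt hz.2 z))
  obtain ⟨-, hb⟩ := not_or.1 (mt norm_mul_eq_zero.2 hab)
  refine of_imp hz ?_ ?_ <;> intro n q t
  · obtain ⟨p, tab, tc⟩ := t.exists_of_norm_mul hab hc
    obtain ⟨m, ta, tb⟩ := tab.exists_of_norm_mul ha hb
    have tbc := tb.norm_mul tc
    exact ⟨.norm_mul ta tbc, .trans (.norm_mul_congr tab tc (.norm_mul ta tb) (.refl tc))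
      (.trans (.mul_assoc ta tb tc)
        (.symm (.norm_mul_congr ta tbc (.refl ta) (.norm_mul tb tc))))⟩
  · obtain ⟨m, ta, tbc⟩ := t.exists_of_norm_mul ha hbc
    obtain ⟨p, tb, tc⟩ := tbc.exists_of_norm_mul hb hc
    exact .norm_mul (.norm_mul ta tb) tc

theorem add_zero : NormEquiv Γ (.add a .zero) a :=
  of_imp (by rw [norm_add_of_right_eq_zero rfl])
    (fun _ _ t =>
      have ta := (KTyp.norm_add_iff.1 t).1
      ⟨ta, .trans (.norm_add ta (.zero _ _)) (.add_zero ta)⟩)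
    fun n m ta => .norm_add ta (.zero n m)

theorem add_comm : NormEquiv Γ (.add a b) (.add b a) where
  norm_eq_zero_iff := by simp only [norm_add_eq_zero, and_comm]
  typ_iff n m := by simp only [KTyp.norm_add_iff, and_comm]
  keq n m t := by
    obtain ⟨ta, tb⟩ := KTyp.norm_add_iff.1 t
    exact .trans (.norm_add ta tb) (.trans (.add_comm ta tb) (.symm (.norm_add tb ta)))

theorem add_assoc : NormEquiv Γ (.add (.add a b) c) (.add a (.add b c)) where
  norm_eq_zero_iff := by simp only [norm_add_eq_zero, and_assoc]
  typ_iff n m := by simp only [KTyp.norm_add_iff, and_assoc]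
  keq n m t := by
    obtain ⟨tab, tc⟩ := KTyp.norm_add_iff.1 t
    obtain ⟨ta, tb⟩ := KTyp.norm_add_iff.1 tab
    exact .trans (.norm_add_congr tab tc (.norm_add ta tb) (.refl tc))
      (.trans (.add_assoc ta tb tc)
        (.symm (.norm_add_congr ta (.norm_add tb tc) (.refl ta) (.norm_add tb tc))))

theorem add_idem : NormEquiv Γ (.add a a) a where
  norm_eq_zero_iff := by rw [norm_add_eq_zero, and_self_iff]
  typ_iff n m := by rw [KTyp.norm_add_iff, and_self_iff]
  keq n m t := by
    obtain ⟨ta, -⟩ := KTyp.norm_add_iff.1 t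
    exact .trans (.norm_add ta ta) (.add_idem ta)

theorem mul_zero : NormEquiv Γ (.mul a .zero) .zero :=
  of_eq_zero (norm_mul_eq_zero.2 (.inr rfl)) rfl

theorem zero_mul : NormEquiv Γ (.mul .zero a) .zero :=
  of_eq_zero (norm_mul_eq_zero.2 (.inl rfl)) rfl

theorem mul_add : NormEquiv Γ (.mul a (.add b c)) (.add (.mul a b) (.mul a c)) := by
  have hz : (KTerm.mul a (.add b c)).norm = .zero ↔
      (KTerm.add (.mul a b) (.mul a c)).norm = .zero := by
    simp only [norm_mul_eq_zero, norm_add_eq_zero, or_and_left]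
  by_cases z : (KTerm.mul a (.add b c)).norm = .zero
  · exact of_eq_zero z (hz.1 z)
  obtain ⟨ha, hbc⟩ := not_or.1 (mt norm_mul_eq_zero.2 z)
  refine of_imp hz ?_ ?_ <;> intro n p t
  · obtain ⟨m, ta, tbc⟩ := t.exists_of_norm_mul ha hbc
    obtain ⟨tb, tc⟩ := KTyp.norm_add_iff.1 tbc
    have tab := ta.norm_mul tb
    have tac := ta.norm_mul tc
    exact ⟨.norm_add tab tac, .trans (.norm_mul_congr ta tbc (.refl ta) (.norm_add tb tc))
      (.trans (.mul_add ta tb tc)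
        (.symm (.norm_add_congr tab tac (.norm_mul ta tb) (.norm_mul ta tc))))⟩
  · obtain ⟨tab, tac⟩ := KTyp.norm_add_iff.1 t
    obtain ⟨m, ta, tb, tc⟩ := KTyp.exists_common_of_norm_mul_left ha hbc tab tac
    exact .norm_mul ta (.norm_add tb tc)

theorem add_mul : NormEquiv Γ (.mul (.add b c) a) (.add (.mul b a) (.mul c a)) := by
  have hz : (KTerm.mul (.add b c) a).norm = .zero ↔
      (KTerm.add (.mul b a) (.mul c a)).norm = .zero := by
    simp only [norm_mul_eq_zero, norm_add_eq_zero, and_or_right]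
  by_cases z : (KTerm.mul (.add b c) a).norm = .zero
  · exact of_eq_zero z (hz.1 z)
  obtain ⟨hbc, ha⟩ := not_or.1 (mt norm_mul_eq_zero.2 z)
  refine of_imp hz ?_ ?_ <;> intro n p t
  · obtain ⟨m, tbc, ta⟩ := t.exists_of_norm_mul hbc ha
    obtain ⟨tb, tc⟩ := KTyp.norm_add_iff.1 tbc
    have tba := tb.norm_mul ta
    have tca := tc.norm_mul ta
    exact ⟨.norm_add tba tca, .trans (.norm_mul_congr tbc ta (.norm_add tb tc) (.refl ta))
      (.trans (.add_mul ta tb tc)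
        (.symm (.norm_add_congr tba tca (.norm_mul tb ta) (.norm_mul tc ta))))⟩
  · obtain ⟨tba, tca⟩ := KTyp.norm_add_iff.1 t
    obtain ⟨m, tb, tc, ta⟩ := KTyp.exists_common_of_norm_mul_right ha hbc tba tca
    exact .norm_mul (.norm_add tb tc) ta

theorem star_unfold : NormEquiv Γ (.add .one (.mul a (.star a))) (.star a) := by
  refine of_imp
    (iff_of_false (fun h => norm_one_ne_zero (norm_add_eq_zero.1 h).1) norm_star_ne_zero) ?_ ?_ <;>
    intro n m t
  · obtain ⟨t1, taa⟩ := KTyp.norm_add_iff.1 t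
    obtain rfl := KTyp.one_iff.1 t1
    have ta : KTyp Γ a.norm n n := by
      by_cases ha : a.norm = .zero
      · exact .of_eq_zero ha
      obtain ⟨_, ta, tsa⟩ := taa.exists_of_norm_mul ha norm_star_ne_zero
      obtain ⟨rfl, -⟩ := KTyp.norm_star_iff.1 tsa
      exact ta
    exact ⟨.norm_star ta, .trans (.norm_add_congr t1 taa (.refl t1)
      (.norm_mul_congr ta ta.norm_star (.refl ta) (.norm_star ta)))
      (.trans (.star_unfold ta) (.symm (.norm_star ta)))⟩
  · obtain ⟨rfl, ta⟩ := KTyp.norm_star_iff.1 t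
    exact .norm_add (.one n) (.norm_mul ta ta.norm_star)

variable {a b}

theorem star_ind_l (h : NormEquiv Γ (.add (.mul a b) b) b) :
    NormEquiv Γ (.add (.mul (.star a) b) b) b := by
  by_cases hb : b.norm = .zero
  · exact of_eq_zero (norm_add_eq_zero.2 ⟨norm_mul_eq_zero.2 (.inr hb), hb⟩) hb
  have ta_square : ∀ n m, KTyp Γ b.norm n m → KTyp Γ a.norm n n := fun n m tb =>
    (KTyp.norm_add_iff.1 ((h.typ_iff n m).2 tb)).1.norm_left_of_norm_mul hb tb
  refine of_imp (iff_of_false (fun z => hb (norm_add_eq_zero.1 z).2) hb) ?_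
    fun n m tb => .norm_add (.norm_mul (.norm_star (ta_square n m tb)) tb) tb
  intro n m t
  obtain ⟨tsb, tb⟩ := KTyp.norm_add_iff.1 t
  have ta := ta_square n m tb
  have tab := ta.norm_mul tb
  have hab : KEq Γ ((a.norm.mul b.norm).add b.norm) b.norm n m :=
    .trans (.symm (.norm_add_congr tab tb (.norm_mul ta tb) (.refl tb)))
      (h.keq n m (.norm_add tab tb))
  exact ⟨tb, .trans (.norm_add_congr tsb tb
    (.norm_mul_congr ta.norm_star tb (.norm_star ta) (.refl tb)) (.refl tb)) (.star_ind_l hab)⟩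

theorem star_ind_r (h : NormEquiv Γ (.add (.mul b a) b) b) :
    NormEquiv Γ (.add (.mul b (.star a)) b) b := by
  by_cases hb : b.norm = .zero
  · exact of_eq_zero (norm_add_eq_zero.2 ⟨norm_mul_eq_zero.2 (.inl hb), hb⟩) hb
  have ta_square : ∀ n m, KTyp Γ b.norm n m → KTyp Γ a.norm m m := fun n m tb =>
    (KTyp.norm_add_iff.1 ((h.typ_iff n m).2 tb)).1.norm_right_of_norm_mul hb tb
  refine of_imp (iff_of_false (fun z => hb (norm_add_eq_zero.1 z).2) hb) ?_
    fun n m tb => .norm_add (.norm_mul tb (.norm_star (ta_square n m tb))) tb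
  intro n m t
  obtain ⟨tbs, tb⟩ := KTyp.norm_add_iff.1 t
  have ta := ta_square n m tb
  have tba := tb.norm_mul ta
  have hba : KEq Γ ((b.norm.mul a.norm).add b.norm) b.norm n m :=
    .trans (.symm (.norm_add_congr tba tb (.norm_mul tb ta) (.refl tb)))
      (h.keq n m (.norm_add tba tb))
  exact ⟨tb, .trans (.norm_add_congr tbs tb
    (.norm_mul_congr tb ta.norm_star (.refl tb) (.norm_star ta)) (.refl tb)) (.star_ind_r hba)⟩

theorem keq_of_typ (h : NormEquiv Γ a b) (ha : KTyp Γ a n m) (hb : KTyp Γ b n m) :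
    KEq Γ a b n m :=
  .trans (.symm (.norm_eq ha)) (.trans (h.keq n m ha.norm) (.norm_eq hb))

end NormEquiv

theorem KEq.normEquiv {Δ : X → S × S} {i j : S} (Γ : X → T × T) (h : KEq Δ a b i j) :
    NormEquiv Γ a b := by
  induction h with
  | var x | one | zero => exact .refl _
  | symm _ ih => exact ih.symm
  | trans _ _ ih ih' => exact ih.trans ih'
  | mul _ _ iha ihb => exact iha.mul ihb
  | add _ _ iha ihb => exact iha.add ihb
  | star _ ih => exact ih.star
  | one_mul => exact .one_mul _
  | mul_one => exact .mul_one _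
  | mul_assoc => exact .mul_assoc _ _ _
  | add_zero => exact .add_zero _
  | add_comm => exact .add_comm _ _
  | add_assoc => exact .add_assoc _ _ _
  | mul_add => exact .mul_add _ _ _
  | add_mul => exact .add_mul _ _ _
  | mul_zero => exact .mul_zero _
  | zero_mul => exact .zero_mul _
  | add_idem => exact .add_idem _
  | star_unfold => exact .star_unfold _
  | star_ind_l _ ih => exact ih.star_ind_l
  | star_ind_r _ ih => exact ih.star_ind_r

end

/-- Untyping theorem for Kleene algebras: for all terms `a,b` and objects `n,m` such
that `a : n→m` and `b : n→m` are derivable in environment `Γ`, the untyped equality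
`⊢ a = b` (i.e. the equality over the singleton set of objects) is derivable iff the
typed equality `a = b : n→m` is derivable in `Γ`. -/
theorem kleene_untyping {X T : Type} (Γ : X → T × T)
    (a b : KTerm X) (n m : T) :
    KTyp Γ a n m → KTyp Γ b n m →
    (KEq (fun _ : X => ((), ())) a b () () ↔ KEq Γ a b n m) := by
  intro ha hb
  exact ⟨fun h => (h.normEquiv Γ).keq_of_typ ha hb, fun h => h.map fun _ => ()⟩
end
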